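/- Let p > 1 and α > p - 1 be real numbers, and for each positive integer n let S_n = ∑_{k=1}^n k^{α-p}. Then for every integer n ≥ 2, S_{n-1}^{-1/(p-1)} - S_n^{-1/(p-1)} ≥ ( (α-p+1)^{p/(p-1)} / ((p-1) n^{α/(p-1)}) ) · ∑_{k=0}^∞ (α-p+1)^{2k} / ( 2^{2k} (p-1)^{2k} (2k+1)! · n^{2k} ). -/

import Mathlib

lemma aux_conv (a : ℝ) (ha : 0 < a) (h : a ≤ 1 ∨ 2 ≤ a) :
    ConvexOn ℝ (Set.Ico (0:ℝ) 1) (fun t => (1+t)^a - (1-t)^a) := by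
  have key : ∀ (b : ℝ) (t : ℝ), 0 < t → t < 1 →
      HasDerivAt (fun t : ℝ => (1+t)^b) (b*(1+t)^(b-1)) t ∧
      HasDerivAt (fun t : ℝ => (1-t)^b) (-(b*(1-t)^(b-1))) t := by
    intro b t h0 h1
    constructor
    · have := ((hasDerivAt_id t).const_add 1).rpow_const (p := b) (Or.inl (by simp; linarith))
      exact this.congr_deriv (by simp)
    · have := ((hasDerivAt_id t).const_sub 1).rpow_const (p := b) (Or.inl (by simp; linarith))
      exact this.congr_deriv (by simp)
  have hint : interior (Set.Ico (0:ℝ) 1) = Set.Ioo 0 1 := interior_Ico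
  refine convexOn_of_hasDerivWithinAt2_nonneg (convex_Ico 0 1)
    (f' := fun t => a*(1+t)^(a-1) + a*(1-t)^(a-1))
    (f'' := fun t => a*((a-1)*(1+t)^(a-1-1)) - a*((a-1)*(1-t)^(a-1-1))) ?_ ?_ ?_ ?_
  · apply ContinuousOn.sub
    · exact ContinuousOn.rpow_const (by fun_prop) (fun x hx => Or.inr ha.le)
    · exact ContinuousOn.rpow_const (by fun_prop) (fun x hx => Or.inr ha.le)
  · rw [hint]; intro t ht
    have := (key a t ht.1 ht.2)
    exact ((this.1.sub this.2).congr_deriv (by ring)).hasDerivWithinAt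
  · rw [hint]; intro t ht
    have := (key (a-1) t ht.1 ht.2)
    exact (((this.1.const_mul a).add (this.2.const_mul a)).congr_deriv (by ring)).hasDerivWithinAt
  · rw [hint]; intro t ht
    obtain ⟨h0, h1⟩ := ht
    have : 0 ≤ (a-1) * ((1+t)^(a-1-1) - (1-t)^(a-1-1)) := by
      rcases h with h | h
      · apply mul_nonneg_of_nonpos_of_nonpos (by linarith)
        have := Real.rpow_le_rpow_of_nonpos (x := 1-t) (y := 1+t) (z := a-1-1) (by linarith) (by linarith) (by linarith)
        linarith
      · apply mul_nonneg (by linarith)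
        have := Real.rpow_le_rpow (x := 1-t) (y := 1+t) (z := a-1-1) (by linarith) (by linarith) (by linarith)
        linarith
    nlinarith

lemma aux_ratio (a : ℝ) (ha : 0 < a) (h : a ≤ 1 ∨ 2 ≤ a) (s t : ℝ) (hs : 0 < s) (hst : s ≤ t)
    (ht : t < 1) : t * ((1+s)^a - (1-s)^a) ≤ s * ((1+t)^a - (1-t)^a) := by
  have hc := (aux_conv a ha h).2 (show (0:ℝ) ∈ Set.Ico (0:ℝ) 1 by simp)
    (show t ∈ Set.Ico (0:ℝ) 1 from ⟨by linarith, ht⟩)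
    (show 0 ≤ 1 - s/t by rw [sub_nonneg, div_le_one (by linarith)]; exact hst)
    (show 0 ≤ s/t from div_nonneg hs.le (by linarith)) (by ring)
  have ht0 : 0 < t := by linarith
  have e : s / t * t = s := by field_simp
  simp only [smul_eq_mul, mul_zero, zero_add, e] at hc
  simp only [add_zero, sub_zero, sub_self, mul_zero, zero_add] at hc
  calc _ ≤ t * (s/t * ((1+t)^a - (1-t)^a)) := by gcongr
    _ = _ := by field_simp

/-- scaled -/
lemma aux_scale (a x : ℝ) (hx : 1 ≤ x) :
    (x+1/2)^a - (x-1/2)^a = x^a * ((1+1/(2*x))^a - (1-1/(2*x))^a) := by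
  have : 1/(2*x) ≤ 1 := by rw [div_le_one] <;> linarith
  have h0 : 0 < 1/(2*x) := by positivity
  rw [mul_sub, ← Real.mul_rpow (by linarith) (by linarith), ← Real.mul_rpow (by linarith) (by linarith)]
  congr 2 <;> field_simp

lemma aux_caseA (a : ℝ) (ha : 0 < a) (h : a ≤ 1 ∨ 2 ≤ a) (m : ℕ) :
    (∑ k ∈ Finset.Icc 1 m, (k : ℝ) ^ (a-1)) * (((m:ℝ)+1+1/2)^a - ((m:ℝ)+1-1/2)^a)
      ≤ ((m:ℝ)+1)^(a-1) * ((m:ℝ)+1-1/2)^a := by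
  have Dpos : ∀ x : ℝ, 1 ≤ x → 0 < (x+1/2)^a - (x-1/2)^a := by
    intro x hx
    have := Real.rpow_lt_rpow (x := x-1/2) (y := x+1/2) (by linarith) (by linarith) ha
    linarith
  induction m with
  | zero => simp; positivity
  | succ m ih =>
    rw [Finset.sum_Icc_succ_top (by omega)]
    push_cast
    set x : ℝ := (m:ℝ)+1 with hx
    have hx1 : 1 ≤ x := by simp [hx]
    set σ := ∑ k ∈ Finset.Icc 1 m, (k : ℝ) ^ (a-1)
    have e1 : x + 1 - 1/2 = x + 1/2 := by ring
    rw [e1]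
    have D1 := Dpos x hx1
    have D2 := Dpos (x+1) (by linarith)
    rw [e1] at D2
    have hA : (σ + x^(a-1)) * ((x+1/2)^a - (x-1/2)^a) ≤ x^(a-1) * (x+1/2)^a := by nlinarith
    have hB : x^(a-1) * ((x+1+1/2)^a - (x+1/2)^a) ≤ (x+1)^(a-1) * ((x+1/2)^a - (x-1/2)^a) := by
      have r := aux_ratio a ha h (1/(2*(x+1))) (1/(2*x)) (by positivity)
        (by gcongr; linarith) (by rw [div_lt_one] <;> linarith)
      have s1 := aux_scale a x hx1
      have s2 := aux_scale a (x+1) (by linarith)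
      rw [e1] at s2
      rw [s1, s2]
      set u := (1+1/(2*x))^a - (1-1/(2*x))^a
      set v := (1+1/(2*(x+1)))^a - (1-1/(2*(x+1)))^a
      rw [Real.rpow_sub_one (by positivity), Real.rpow_sub_one (by positivity)]
      have : 0 ≤ 2 * x^a * (x+1)^a := by positivity
      calc _ = 2 * x^a * (x+1)^a * (1/(2*x) * v) := by field_simp
        _ ≤ 2 * x^a * (x+1)^a * (1/(2*(x+1)) * u) := by gcongr
        _ = _ := by field_simp
    have hP : 0 < (x+1/2)^a := by positivity
    set D := (x+1/2)^a - (x-1/2)^a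
    set E := (x+1+1/2)^a - (x+1/2)^a
    refine le_of_mul_le_mul_right (a := D) ?_ D1
    calc _ = ((σ + x^(a-1)) * D) * E := by ring
      _ ≤ (x^(a-1) * (x+1/2)^a) * E := by gcongr
      _ = (x^(a-1) * E) * (x+1/2)^a := by ring
      _ ≤ ((x+1)^(a-1) * D) * (x+1/2)^a := by gcongr
      _ = _ := by ring

lemma aux_log (x : ℝ) (hx : 1 ≤ x) : Real.exp (1/x) * (x-1/2) ≤ x + 1/2 := by
  have h := Real.hasSum_log_sub_log_of_abs_lt_one (x := 1/(2*x))
    (by rw [abs_of_pos (by positivity), div_lt_one] <;> linarith)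
  have h1 := h.summable.sum_le_tsum (Finset.range 1) (fun i _ => by positivity)
  rw [h.tsum_eq] at h1
  simp at h1
  have hlt : x⁻¹ * 2⁻¹ < 1 := by
    have : x⁻¹ ≤ 1 := inv_le_one_of_one_le₀ hx
    linarith
  have hp : 0 < x⁻¹ := by positivity
  rw [← Real.log_div (by positivity) (by linarith)] at h1
  have h2 := (Real.le_log_iff_exp_le (by apply div_pos <;> linarith)).1 h1
  rw [le_div_iff₀ (by linarith)] at h2
  have e : 2 * (x⁻¹ * 2⁻¹) = 1/x := by field_simp
  rw [e] at h2
  have h3 := mul_le_mul_of_nonneg_right h2 (by linarith : 0 ≤ x)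
  have e1 : Real.exp (1/x) * (1 - x⁻¹*2⁻¹) * x = Real.exp (1/x) * (x - 1/2) := by field_simp
  have e2 : (1 + x⁻¹*2⁻¹) * x = x + 1/2 := by field_simp
  rw [e1, e2] at h3
  exact h3

lemma aux_mainA (a : ℝ) (ha : 0 < a) (h : a ≤ 1 ∨ 2 ≤ a) (m : ℕ) :
    (∑ k ∈ Finset.Icc 1 m, (k : ℝ) ^ (a-1)) * (Real.exp (a/((m:ℝ)+1)) - 1)
      ≤ ((m:ℝ)+1)^(a-1) := by
  have hA := aux_caseA a ha h m
  have hσ : 0 ≤ ∑ k ∈ Finset.Icc 1 m, (k : ℝ) ^ (a-1) := Finset.sum_nonneg (fun i _ => by positivity)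
  set σ := ∑ k ∈ Finset.Icc 1 m, (k : ℝ) ^ (a-1)
  set x : ℝ := (m:ℝ)+1 with hx
  have hx1 : 1 ≤ x := by simp [hx]
  have hl := Real.rpow_le_rpow (z := a) (mul_nonneg (Real.exp_pos _).le (by linarith)) (aux_log x hx1) ha.le
  rw [Real.mul_rpow (Real.exp_pos _).le (by linarith), ← Real.exp_mul] at hl
  have e : 1/x*a = a/x := by ring
  rw [e] at hl
  have hp : 0 < (x-1/2)^a := Real.rpow_pos_of_pos (by linarith) _
  refine le_of_mul_le_mul_right (a := (x-1/2)^a) ?_ hp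
  refine le_trans ?_ hA
  rw [mul_assoc]
  gcongr
  linarith

lemma aux_trap (a x : ℝ) (h1 : 1 ≤ a) (h2 : a ≤ 2) (hx : 1 ≤ x) :
    (x^(a-1) + (x+1)^(a-1))/2 ≤ ((x+1)^a - x^a)/a := by
  have hd : ∀ y, 0 < y → ∀ b : ℝ, HasDerivAt (fun y : ℝ => y^b) (b*y^(b-1)) y :=
    fun y hy b => Real.hasDerivAt_rpow_const (Or.inl hy.ne')
  have hf : ∀ y, x ≤ y → HasDerivAt (fun y : ℝ => (y^a - x^a)/a - (y-x)/2*(x^(a-1)+y^(a-1)))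
      ((y^(a-1) - x^(a-1) - (y-x)*((a-1)*y^(a-1-1)))/2) y := by
    intro y hy
    have hy0 : 0 < y := by linarith
    have := (((hd y hy0 a).sub_const (x^a)).div_const a).sub
      ((((hasDerivAt_id y).sub_const x).div_const 2).mul ((hd y hy0 (a-1)).const_add (x^(a-1))))
    refine this.congr_deriv ?_
    simp only [id]
    field_simp
    ring
  have hm : MonotoneOn (fun y : ℝ => (y^a - x^a)/a - (y-x)/2*(x^(a-1)+y^(a-1))) (Set.Ici x) := by
    apply monotoneOn_of_hasDerivWithinAt_nonneg (convex_Ici x)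
      (f' := fun y => ((y^(a-1) - x^(a-1) - (y-x)*((a-1)*y^(a-1-1)))/2))
    · intro y hy
      exact (hf y hy).continuousAt.continuousWithinAt
    · intro y hy
      rw [interior_Ici] at hy
      exact (hf y (le_of_lt hy)).hasDerivWithinAt
    · intro y hy
      rw [interior_Ici] at hy
      have hy : x < y := hy
      have hy0 : 0 < y := by linarith
      have hxy : 0 < x/y := by positivity
      have b := rpow_one_add_le_one_add_mul_self (s := x/y - 1) (by linarith)
        (p := a-1) (by linarith) (by linarith)
      have e : 1 + (x/y-1) = x/y := by ring
      rw [e, Real.div_rpow (by linarith) hy0.le, div_le_iff₀ (by positivity)] at b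
      rw [Real.rpow_sub_one hy0.ne' (a-1)]
      have e2 : (1 + (a-1)*(x/y-1))*y^(a-1) = y^(a-1) - (y-x)*((a-1)*(y^(a-1)/y)) := by
        field_simp
        ring
      linarith
  have := hm (Set.self_mem_Ici) (show x + 1 ∈ Set.Ici x by simp) (by linarith)
  simp at this
  linarith

lemma aux_mainB (a : ℝ) (h1 : 1 ≤ a) (h2 : a ≤ 2) (m : ℕ) (hm : 1 ≤ m) :
    (∑ k ∈ Finset.Icc 1 m, (k : ℝ) ^ (a-1)) * (Real.exp (a/((m:ℝ)+1)) - 1)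
      ≤ ((m:ℝ)+1)^(a-1) := by
  have hS : ∀ m : ℕ, ∑ k ∈ Finset.Icc 1 m, (k : ℝ) ^ (a-1) ≤ ((m:ℝ)+1)^a/a - ((m:ℝ)+1)^(a-1)/2 := by
    intro m
    induction m with
    | zero => simp; exact inv_anti₀ (by linarith) h2
    | succ m ih =>
      rw [Finset.sum_Icc_succ_top (by omega)]
      push_cast
      have := aux_trap a ((m:ℝ)+1) h1 h2 (by simp)
      rw [sub_div] at this
      linarith
  have hS := hS m
  have hσ : 0 ≤ ∑ k ∈ Finset.Icc 1 m, (k : ℝ) ^ (a-1) := Finset.sum_nonneg (fun i _ => by positivity)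
  set σ := ∑ k ∈ Finset.Icc 1 m, (k : ℝ) ^ (a-1)
  have hx2 : (2:ℝ) ≤ (m:ℝ)+1 := by
    have : (1:ℝ) ≤ m := by exact_mod_cast hm
    linarith
  set x : ℝ := (m:ℝ)+1 with hx
  have hl := aux_log (x/a) (by rw [le_div_iff₀] <;> linarith)
  have e : 1/(x/a) = a/x := by field_simp
  rw [e] at hl
  have e3 : x^a/a - x^(a-1)/2 = x^(a-1) * (x/a - 1/2) := by
    rw [Real.rpow_sub_one (by linarith)]; field_simp
  rw [e3] at hS
  have hE : 0 ≤ Real.exp (a/x) - 1 := by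
    have := Real.add_one_le_exp (a/x)
    have : 0 < a/x := by positivity
    linarith
  calc _ ≤ (x^(a-1) * (x/a - 1/2)) * (Real.exp (a/x) - 1) := by gcongr
    _ = x^(a-1) * (Real.exp (a/x) * (x/a - 1/2) - (x/a-1/2)) := by ring
    _ ≤ x^(a-1) * 1 := by gcongr; linarith
    _ = _ := by ring

lemma aux_main (a : ℝ) (ha : 0 < a) (m : ℕ) (hm : 1 ≤ m) :
    (∑ k ∈ Finset.Icc 1 m, (k : ℝ) ^ (a-1)) * (Real.exp (a/((m:ℝ)+1)) - 1)
      ≤ ((m:ℝ)+1)^(a-1) := by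
  by_cases h1 : a ≤ 1
  · exact aux_mainA a ha (Or.inl h1) m
  by_cases h2 : 2 ≤ a
  · exact aux_mainA a ha (Or.inr h2) m
  exact aux_mainB a (by linarith) (by linarith) m hm

lemma aux_final (a q x s : ℝ) (ha : 0 < a) (hq : 0 < q) (hx : 0 < x) (hs : 0 < s)
    (h : s * (Real.exp (a/x) - 1) ≤ x^(a-1)) :
    (x^a/a)^(-q) * (2 * Real.sinh (q*(a/x)/2)) ≤ s^(-q) - (s + x^(a-1))^(-q) := by
  set y := a/x with hy
  have hy0 : 0 < y := by positivity
  have h1 : s * Real.exp y ≤ s + x^(a-1) := by linarith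
  have h2 : (s + x^(a-1))^(-q) ≤ (s * Real.exp y)^(-q) :=
    Real.rpow_le_rpow_of_nonpos (by positivity) h1 (by linarith)
  have h3 : s * Real.exp (y/2) ≤ x^a/a := by
    have hsinh : y/2 ≤ Real.sinh (y/2) := Real.self_le_sinh_iff.2 (by positivity)
    have e : Real.exp y - 1 = Real.exp (y/2) * (2 * Real.sinh (y/2)) := by
      rw [Real.sinh_eq]
      have : Real.exp y = Real.exp (y/2) * Real.exp (y/2) := by rw [← Real.exp_add]; ring_nf
      have h' : Real.exp (y/2) * Real.exp (-(y/2)) = 1 := by rw [← Real.exp_add]; simp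
      linear_combination this + h'
    rw [e] at h
    have h4 : s * Real.exp (y/2) * y ≤ x^(a-1) := by
      refine le_trans ?_ h
      rw [← mul_assoc]
      gcongr
      linarith
    rw [Real.rpow_sub_one hx.ne', le_div_iff₀ hx] at h4
    rw [le_div_iff₀ ha]
    have : s * Real.exp (y/2) * y * x = s * Real.exp (y/2) * a := by rw [hy]; field_simp
    linarith
  have h5 : (x^a/a)^(-q) ≤ (s * Real.exp (y/2))^(-q) :=
    Real.rpow_le_rpow_of_nonpos (by positivity) h3 (by linarith)
  have hsq : 0 ≤ Real.sinh (q*y/2) := Real.sinh_nonneg_iff.2 (by positivity)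
  calc _ ≤ (s * Real.exp (y/2))^(-q) * (2 * Real.sinh (q*y/2)) := by gcongr
    _ = s^(-q) - (s * Real.exp y)^(-q) := by
      rw [Real.mul_rpow hs.le (Real.exp_pos _).le, Real.mul_rpow hs.le (Real.exp_pos _).le,
        ← Real.exp_mul, ← Real.exp_mul, Real.sinh_eq]
      have e1 : Real.exp (y/2 * -q) * Real.exp (q*y/2) = 1 := by
        rw [← Real.exp_add]; ring_nf; simp
      have e2 : Real.exp (y/2 * -q) * Real.exp (-(q*y/2)) = Real.exp (y * -q) := by
        rw [← Real.exp_add]; ring_nf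
      linear_combination s^(-q) * (e1 - e2)
    _ ≤ _ := by linarith

/-- Corollary 4.3 (full series form): for `p > 1`, `α > p - 1` and
`S_n = ∑_{k=1}^n k^{α-p}`, for every `n ≥ 2` one has
`S_{n-1}^{-1/(p-1)} - S_n^{-1/(p-1)} ≥ ((α-p+1)^{p/(p-1)}/((p-1) n^{α/(p-1)})) ·
  ∑_{k=0}^∞ (α-p+1)^{2k}/(2^{2k}(p-1)^{2k}(2k+1)! n^{2k})`. -/
theorem stmt_11 (p α : ℝ) (hp : 1 < p) (hα : p - 1 < α)
    (S : ℕ → ℝ) (hS : ∀ n, S n = ∑ k ∈ Finset.Icc 1 n, (k : ℝ) ^ (α - p)) :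
    ∀ n : ℕ, 2 ≤ n →
      S (n - 1) ^ (-1 / (p - 1)) - S n ^ (-1 / (p - 1)) ≥
        (α - p + 1) ^ (p / (p - 1)) / ((p - 1) * (n : ℝ) ^ (α / (p - 1))) *
          ∑' k : ℕ, (α - p + 1) ^ (2 * k) /
            (2 ^ (2 * k) * (p - 1) ^ (2 * k) * (Nat.factorial (2 * k + 1) : ℝ) *
              (n : ℝ) ^ (2 * k)) := by
  intro n hn
  obtain ⟨m, rfl⟩ : ∃ m, n = m + 1 := ⟨n - 1, by omega⟩
  have hm : 1 ≤ m := by omega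
  obtain ⟨a, rfl⟩ : ∃ a, α = a + p - 1 := ⟨α - p + 1, by ring⟩
  obtain ⟨r, rfl⟩ : ∃ r, p = r + 1 := ⟨p - 1, by ring⟩
  have ha : 0 < a := by linarith
  have hr : 0 < r := by linarith
  have e1 : a + (r+1) - 1 - (r+1) = a - 1 := by ring
  have e2 : a - 1 + 1 = a := by ring
  have e3 : r + 1 - 1 = r := by ring
  have e4 : a + (r+1) - 1 = a + r := by ring
  simp only [e1, e2, e3] at hS ⊢
  rw [e4]
  have hM := aux_main a ha m hm
  rw [← hS] at hM
  have hSp : 0 < S m := by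
    rw [hS]
    apply Finset.sum_pos
    · intro i hi
      have : 0 < i := by simp at hi; omega
      positivity
    · exact ⟨1, by simp [hm]⟩
  have hS1 : S (m+1) = S m + ((m:ℝ)+1)^(a-1) := by
    rw [hS, hS, Finset.sum_Icc_succ_top (by omega)]; push_cast; rfl
  have hF := aux_final a (1/r) ((m:ℝ)+1) (S m) ha (by positivity) (by positivity) hSp hM
  rw [← hS1] at hF
  have e5 : -1/r = -(1/r) := by ring
  rw [e5, ge_iff_le]
  simp only [Nat.add_sub_cancel]
  refine le_of_eq_of_le ?_ hF
  push_cast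
  have hx : 0 < (m:ℝ)+1 := by positivity
  set x : ℝ := (m:ℝ)+1
  have hz : 0 < 1/r*(a/x)/2 := by positivity
  have hsum := Real.hasSum_sinh (1/r*(a/x)/2)
  rw [← hsum.tsum_eq, ← tsum_mul_left, ← tsum_mul_left, ← tsum_mul_left]
  congr 1
  ext k
  rw [Real.rpow_neg (by positivity), Real.div_rpow (by positivity) ha.le, ← Real.rpow_mul hx.le]
  have f1 : (r+1)/r = 1 + 1/r := by field_simp
  have f2 : (a+r)/r = a*(1/r) + 1 := by field_simp
  rw [f1, f2, Real.rpow_add ha, Real.rpow_add hx, Real.rpow_one, Real.rpow_one]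
  have g1 : 0 < a^(1/r) := by positivity
  have g2 : 0 < x^(a*(1/r)) := by positivity
  set A := a^(1/r)
  set B := x^(a*(1/r))
  rw [pow_succ, div_pow, mul_pow, div_pow, div_pow, one_pow]
  field_simp
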